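/- arXiv:2309.04263 — 3 statements merged into one kernel-verified Lean document; each statement's English description precedes it below -/
import Mathlib

section
/- The closure in C₀(ℝ, ℂ) (supremum norm) of the linear span of the set {ρ_s : s ∈ ℝ \ {0}} is closed under pointwise multiplication; that is, it is a subalgebra of C₀(ℝ, ℂ). -/
/-!
Multiplication is jointly continuous and bilinear, so it suffices to multiply two resolvents
`ρ_s` and `ρ_t`. For `s ≠ t` the resolvent identity `ρ_s - ρ_t = i (s - t) ρ_s ρ_t` places the
product in the linear span itself (`mul_mem_span_of_ne`). The square `ρ_s ^ 2` is the uniform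
limit of `ρ_s ρ_t` as `t → s` with `t ≠ s` (`mem_closure_resolvents_ne`), hence lies in the closure.
-/

open Complex ZeroAtInfty

/-- The set of basic resolvent functions `ρ_s(x) = (x - i s)⁻¹`, `s ∈ ℝ \ {0}`, viewed as
elements of `C₀(ℝ, ℂ)`. -/
def basicResolvents : Set C₀(ℝ, ℂ) :=
  {g | ∃ s : ℝ, s ≠ 0 ∧ ∀ x : ℝ, g x = ((x : ℂ) - Complex.I * s)⁻¹}

theorem abs_le_norm_sub_I_mul (x s : ℝ) : |s| ≤ ‖(x : ℂ) - I * s‖ := by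
  simpa [I_im] using Complex.abs_im_le_norm ((x : ℂ) - I * s)

theorem sub_I_mul_ne_zero (x : ℝ) {s : ℝ} (hs : s ≠ 0) : (x : ℂ) - I * s ≠ 0 :=
  norm_pos_iff.1 ((abs_pos.2 hs).trans_le (abs_le_norm_sub_I_mul x s))

theorem exists_resolvent {s : ℝ} (hs : s ≠ 0) :
    ∃ g : C₀(ℝ, ℂ), ∀ x : ℝ, g x = ((x : ℂ) - I * s)⁻¹ := by
  refine ⟨⟨⟨fun x : ℝ => ((x : ℂ) - I * s)⁻¹, ?_⟩, ?_⟩, fun x => rfl⟩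
  · exact Continuous.inv₀ (by fun_prop) fun x => sub_I_mul_ne_zero x hs
  · refine Filter.tendsto_inv₀_cobounded.comp ?_
    rw [← tendsto_norm_atTop_iff_cobounded]
    refine Filter.tendsto_atTop_mono (fun x => ?_) (tendsto_norm_cocompact_atTop (E := ℝ))
    simpa using Complex.abs_re_le_norm ((x : ℂ) - I * s)

/-- The resolvent identity: the product of two distinct resolvents is a linear combination
of them. -/
theorem mul_mem_span_of_ne {s t : ℝ} (hs : s ≠ 0) (ht : t ≠ 0) (hst : s ≠ t) {f g : C₀(ℝ, ℂ)}
    (hf : ∀ x : ℝ, f x = ((x : ℂ) - I * s)⁻¹) (hg : ∀ x : ℝ, g x = ((x : ℂ) - I * t)⁻¹) :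
    f * g ∈ Submodule.span ℂ basicResolvents := by
  have key : f * g = (I * ((s : ℂ) - t))⁻¹ • (f - g) := by
    ext x
    have h1 := sub_I_mul_ne_zero x hs
    have h2 := sub_I_mul_ne_zero x ht
    have h3 : (s : ℂ) - t ≠ 0 := sub_ne_zero.2 (by exact_mod_cast hst)
    have h4 : I * ((s : ℂ) - t) ≠ 0 := mul_ne_zero I_ne_zero h3
    simp only [ZeroAtInftyContinuousMap.mul_apply, ZeroAtInftyContinuousMap.smul_apply,
      ZeroAtInftyContinuousMap.sub_apply, hf, hg, smul_eq_mul]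
    rw [inv_sub_inv h1 h2, eq_inv_mul_iff_mul_eq₀ h4, eq_div_iff (mul_ne_zero h1 h2),
      ← mul_inv, mul_assoc, inv_mul_cancel₀ (mul_ne_zero h1 h2)]
    ring
  rw [key]
  exact Submodule.smul_mem _ _ (Submodule.sub_mem _ (Submodule.subset_span ⟨s, hs, hf⟩)
    (Submodule.subset_span ⟨t, ht, hg⟩))

/-- Each resolvent is a uniform limit of resolvents with other parameters. -/
theorem mem_closure_resolvents_ne {s : ℝ} (hs : s ≠ 0) {f : C₀(ℝ, ℂ)}
    (hf : ∀ x : ℝ, f x = ((x : ℂ) - I * s)⁻¹) :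
    f ∈ closure {g : C₀(ℝ, ℂ) | ∃ t : ℝ, t ≠ 0 ∧ s ≠ t ∧ ∀ x : ℝ, g x = ((x : ℂ) - I * t)⁻¹} := by
  rw [Metric.mem_closure_iff]
  intro δ hδ
  have hs' : 0 < |s| := abs_pos.2 hs
  -- With `t = s (1 + ε)`, `ε > 0`, one has `|s| ≤ |t|`, so
  -- `‖ρ_s - ρ_t‖ ≤ |s - t| / |s| ^ 2 = ε / |s|`.
  obtain ⟨ε, hε, hεδ⟩ : ∃ ε : ℝ, 0 < ε ∧ ε / |s| < δ :=
    ⟨δ * |s| / 2, by positivity, by field_simp; linarith⟩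
  have ht : s * (1 + ε) ≠ 0 := mul_ne_zero hs (by positivity)
  have hst : s ≠ s * (1 + ε) := fun h => by
    have : s * ε = 0 := by linarith
    exact mul_ne_zero hs hε.ne' this
  obtain ⟨g, hg⟩ := exists_resolvent ht
  refine ⟨g, ⟨_, ht, hst, hg⟩, lt_of_le_of_lt ?_ hεδ⟩
  rw [← ZeroAtInftyContinuousMap.dist_toBCF_eq_dist,
    BoundedContinuousFunction.dist_le (by positivity)]
  intro x
  change dist (f x) (g x) ≤ _
  have h1 := sub_I_mul_ne_zero x hs
  have h2 := sub_I_mul_ne_zero x ht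
  have b1 := abs_le_norm_sub_I_mul x s
  have b2 : |s| ≤ ‖(x : ℂ) - I * (s * (1 + ε) : ℝ)‖ := by
    refine le_trans ?_ (abs_le_norm_sub_I_mul x (s * (1 + ε)))
    rw [abs_mul, abs_of_pos (by positivity : 0 < 1 + ε)]
    nlinarith
  have hnum : ‖((x : ℂ) - I * (s * (1 + ε) : ℝ)) - (x - I * s)‖ = |s| * ε := by
    have : ((x : ℂ) - I * (s * (1 + ε) : ℝ)) - (x - I * s) = -(I * ((s * ε : ℝ) : ℂ)) := by
      push_cast; ring
    rw [this, norm_neg, norm_mul, norm_I, one_mul, norm_real, Real.norm_eq_abs, abs_mul,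
      abs_of_pos hε]
  rw [dist_eq_norm, hf, hg, inv_sub_inv h1 h2, norm_div, norm_mul, hnum]
  calc |s| * ε / (‖(x : ℂ) - I * s‖ * ‖(x : ℂ) - I * (s * (1 + ε) : ℝ)‖)
      ≤ |s| * ε / (|s| * |s|) := by gcongr
    _ = ε / |s| := by field_simp

theorem resolvent_mul_mem_closure {f g : C₀(ℝ, ℂ)} (hf : f ∈ basicResolvents)
    (hg : g ∈ basicResolvents) :
    f * g ∈ closure (Submodule.span ℂ basicResolvents : Set C₀(ℝ, ℂ)) := by
  obtain ⟨s, hs, hf⟩ := hf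
  obtain ⟨t, ht, hg⟩ := hg
  by_cases hst : s = t
  · subst hst
    refine map_mem_closure (f := fun h => f * h) (by fun_prop)
      (mem_closure_resolvents_ne hs hg) ?_
    rintro h ⟨t, ht, hst, hh⟩
    exact mul_mem_span_of_ne hs ht hst hf hh
  · exact subset_closure (mul_mem_span_of_ne hs ht hst hf hg)

/-- The closure (supremum norm) in `C₀(ℝ, ℂ)` of the linear span of the basic resolvents
is closed under pointwise multiplication, i.e. it is a subalgebra of `C₀(ℝ, ℂ)`. -/
theorem closure_span_resolvents_mul_mem
    (f g : C₀(ℝ, ℂ))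
    (hf : f ∈ closure (Submodule.span ℂ basicResolvents : Set C₀(ℝ, ℂ)))
    (hg : g ∈ closure (Submodule.span ℂ basicResolvents : Set C₀(ℝ, ℂ))) :
    f * g ∈ closure (Submodule.span ℂ basicResolvents : Set C₀(ℝ, ℂ)) := by
  rw [← closure_closure]
  refine map_mem_closure₂ continuous_mul hf hg fun a ha b hb => ?_
  rw [← Submodule.topologicalClosure_coe, SetLike.mem_coe]
  induction ha, hb using Submodule.span_induction₂ with
  | mem_mem a b ha hb => exact resolvent_mul_mem_closure ha hb
  | zero_left b hb => rw [zero_mul]; exact zero_mem _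
  | zero_right a ha => rw [mul_zero]; exact zero_mem _
  | add_left a b c _ _ _ h1 h2 => rw [add_mul]; exact add_mem h1 h2
  | add_right a b c _ _ _ h1 h2 => rw [mul_add]; exact add_mem h1 h2
  | smul_left r a b _ _ h => rw [smul_mul_assoc]; exact Submodule.smul_mem _ r h
  | smul_right r a b _ _ h => rw [mul_smul_comm]; exact Submodule.smul_mem _ r h
end

section
/- Let σ > 0 and let r ∈ ℝ with r ≠ 0. Then the Gaussian expectation of the resolvent satisfies ∫_ℝ (x − i r)⁻¹ · (2πσ²)^{−1/2} exp(−x² / (2σ²)) dx = i · sign(r) · ∫₀^∞ exp(−t |r|) · exp(−t² σ² / 2) dt. -/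
/-!
The resolvent is a Laplace transform: with `s = sign r`, one has
`(x - i r)⁻¹ = i s ∫₀^∞ exp ((-|r| - i s x) t) dt`. Since the integrand has modulus `exp (-|r| t)`,
which is integrable against the product of the Gaussian probability measure and Lebesgue measure on
`(0, ∞)`, Fubini reduces the claim to the characteristic function of the Gaussian at `-s t`,
namely `exp (-t² σ² / 2)`.
-/

open Complex MeasureTheory Real

/-- The resolvent `(x - i r)⁻¹` as a Laplace transform, uniformly in the sign of `r`. -/
lemma resolvent_eq_laplace (r : ℝ) (hr : r ≠ 0) (x : ℝ) :
    ((x : ℂ) - Complex.I * r)⁻¹ = Complex.I * (Real.sign r : ℝ) *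
      ∫ t in Set.Ioi (0 : ℝ),
        Complex.exp ((-(|r| : ℝ) - Complex.I * (Real.sign r : ℝ) * x) * t) := by
  have hpos : 0 < |r| := abs_pos.mpr hr
  have hre : (-((|r| : ℝ) : ℂ) - Complex.I * (Real.sign r : ℝ) * x).re < 0 := by
    simpa using hpos
  have hne : (-((|r| : ℝ) : ℂ) - Complex.I * (Real.sign r : ℝ) * x) ≠ 0 := by
    intro h
    rw [h] at hre
    simp at hre
  have hne' : (x : ℂ) - Complex.I * r ≠ 0 := by
    intro h
    apply hr
    simpa using congrArg Complex.im h
  rw [integral_exp_mul_complex_Ioi hre]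
  have hsr : ((|r| : ℝ) : ℂ) = (Real.sign r : ℝ) * r := by
    rw [← Complex.ofReal_mul]
    congr 1
    rcases lt_or_gt_of_ne hr with h | h
    · simp [Real.sign_of_neg h, abs_of_neg h]
    · simp [Real.sign_of_pos h, abs_of_pos h]
  simp only [Complex.ofReal_zero, mul_zero, Complex.exp_zero]
  rw [mul_div_assoc', eq_div_iff hne, inv_mul_eq_iff_eq_mul₀ hne', hsr]
  linear_combination (-(r : ℂ) * (Real.sign r : ℝ)) * Complex.I_sq

theorem gaussian_expectation_resolvent (σ : ℝ) (hσ : 0 < σ) (r : ℝ) (hr : r ≠ 0) :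
    ∫ x : ℝ, ((x : ℂ) - Complex.I * r)⁻¹ *
        (((2 * Real.pi * σ ^ 2) ^ (-(1/2) : ℝ) * Real.exp (-(x ^ 2) / (2 * σ ^ 2)) : ℝ) : ℂ)
      = Complex.I * (Real.sign r : ℝ) *
        ∫ t in Set.Ioi (0 : ℝ),
          ((Real.exp (-(t * |r|)) * Real.exp (-(t ^ 2 * σ ^ 2) / 2) : ℝ) : ℂ) := by
  have hpos : 0 < |r| := abs_pos.mpr hr
  set v : NNReal := ⟨σ ^ 2, sq_nonneg σ⟩ with hv
  have hvσ : (v : ℝ) = σ ^ 2 := rfl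
  have hv0 : v ≠ 0 := by
    rw [← NNReal.coe_ne_zero, hvσ]
    positivity
  set μ := ProbabilityTheory.gaussianReal 0 v with hμ
  have hs : (Real.sign r) ^ 2 = 1 := by
    rcases Real.sign_apply_eq_of_ne_zero r hr with h | h <;> simp [h]
  have hlhs : ∫ x : ℝ, ((x : ℂ) - Complex.I * r)⁻¹ *
        (((2 * Real.pi * σ ^ 2) ^ (-(1/2) : ℝ) * Real.exp (-(x ^ 2) / (2 * σ ^ 2)) : ℝ) : ℂ)
      = ∫ x : ℝ, ((x : ℂ) - Complex.I * r)⁻¹ ∂μ := by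
    rw [hμ, ProbabilityTheory.integral_gaussianReal_eq_integral_smul hv0]
    refine integral_congr_ae (Filter.Eventually.of_forall fun x => ?_)
    simp only [ProbabilityTheory.gaussianPDFReal, hvσ, sub_zero, Complex.real_smul]
    rw [Real.rpow_neg (by positivity), ← Real.sqrt_eq_rpow, mul_comm]
  rw [hlhs]
  simp_rw [resolvent_eq_laplace r hr]
  rw [integral_const_mul]
  congr 1
  rw [integral_integral_swap]
  · refine integral_congr_ae (Filter.Eventually.of_forall fun t => ?_)
    have hc := ProbabilityTheory.charFun_gaussianReal (μ := 0) (v := v) (-(Real.sign r) * t)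
    rw [charFun_apply_real] at hc
    have hsplit : ∀ x : ℝ,
        Complex.exp ((-(|r| : ℝ) - Complex.I * (Real.sign r : ℝ) * x) * t)
        = Complex.exp (-(t * |r| : ℝ)) *
          Complex.exp (((-(Real.sign r) * t : ℝ) : ℂ) * x * Complex.I) := by
      intro x
      rw [← Complex.exp_add]
      congr 1
      push_cast
      ring
    simp only [hsplit]
    rw [integral_const_mul, hc]
    push_cast
    congr 2
    have hs' : ((Real.sign r : ℝ) : ℂ) ^ 2 = 1 := by exact_mod_cast hs
    have hvc : ((v : ℝ) : ℂ) = (σ : ℂ) ^ 2 := by rw [hvσ]; push_cast; rfl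
    rw [hvc]
    linear_combination (-(σ : ℂ) ^ 2 * t ^ 2 / 2) * hs'
  · have hg : Integrable (fun t : ℝ => Real.exp (-|r| * t)) (volume.restrict (Set.Ioi 0)) :=
      exp_neg_integrableOn_Ioi 0 hpos
    refine (hg.comp_snd μ).mono' (by fun_prop) (Filter.Eventually.of_forall fun p => ?_)
    simp [Function.uncurry, Complex.norm_exp]
end

section
/- For all r, r' ∈ ℝ \ {0}, the function (x, y) ↦ (x − i r)⁻¹ · (y − i r')⁻¹ on ℝ² lies in the closure, with respect to the supremum norm in the space of bounded continuous functions ℝ² → ℂ, of the linear span of the two-variable basic resolvent functions {ρ_{a,b,s} : (a,b) ∈ ℝ², s ∈ ℝ \ {0}}. -/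
/-!
Rescaling by `x ↦ x / r`, `y ↦ y / r'` (which also absorbs the signs of `r` and `r'`) reduces the
claim to `((X - i)(Y - i))⁻¹`. For this function one would like to use Feynman's formula
`(AB)⁻¹ = ∫₀¹ (tA + (1-t)B)⁻² dt`, but the integrand is not norm continuous in `t`. A discrete
version of the formula gives an estimate that is uniform in `X` and `Y`.

Divide the segment from `Y` to `X` into `N` equal steps with nodes `w₀, …, w_N`, and put
`a_k = (w_k - i)⁻¹`. The resolvent identity telescopes to `a₀ a_N = N⁻¹ ∑ a_k a_{k+1}`
(`discrete_feynman`). Replacing each `a_k a_{k+1}` by `(a_k² + a_{k+1}²) / 2` costs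
`|a_k - a_{k+1}|² / 2`. Since `|a_k - a_{k+1}| = |sin (arctan w_k - arctan w_{k+1})|`, these errors
are controlled by a telescoping sum of increments of `arctan`, hence the total error is at most
`π / (2N)` (`feynman_error`). Finally, the squares `(w - i)⁻²` are uniform limits of difference
quotients of resolvents in the parameter `s` (`sq_mem`).
-/

open Complex BoundedContinuousFunction

/-- The set of two-variable basic resolvent functions
`ρ_{a,b,s}(x,y) = (a x + b y - i s)⁻¹`, for `(a,b) ∈ ℝ²` and `s ∈ ℝ \ {0}`, viewed as
bounded continuous functions `ℝ² → ℂ` (supremum norm). -/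
def basicResolvents2 : Set ((ℝ × ℝ) →ᵇ ℂ) :=
  {g | ∃ a b s : ℝ, s ≠ 0 ∧
    ∀ p : ℝ × ℝ, g p = ((a * p.1 + b * p.2 : ℝ) - Complex.I * s)⁻¹}

lemma sub_I_mul_ne {s : ℝ} (hs : s ≠ 0) (t : ℝ) : (t : ℂ) - I * s ≠ 0 := by
  intro h
  have := congrArg Complex.im h
  simp at this
  exact hs this

lemma norm_inv_sub_I_mul_le {s : ℝ} (hs : s ≠ 0) (t : ℝ) :
    ‖((t : ℂ) - I * s)⁻¹‖ ≤ |s|⁻¹ := by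
  rw [norm_inv]
  apply inv_anti₀ (abs_pos.mpr hs)
  have := Complex.abs_im_le_norm ((t : ℂ) - I * s)
  simpa using this

/-- The basic resolvent `ρ_{a,b,s}` as a bounded continuous function. -/
noncomputable def resolvent2 (a b s : ℝ) (hs : s ≠ 0) : (ℝ × ℝ) →ᵇ ℂ :=
  BoundedContinuousFunction.ofNormedAddCommGroup
    (fun p : ℝ × ℝ => (((a * p.1 + b * p.2 : ℝ) : ℂ) - I * s)⁻¹)
    (Continuous.inv₀ (by fun_prop) fun _ => sub_I_mul_ne hs _)
    |s|⁻¹ fun _ => norm_inv_sub_I_mul_le hs _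

lemma resolvent2_apply (a b s : ℝ) (hs : s ≠ 0) (p : ℝ × ℝ) :
    resolvent2 a b s hs p = (((a * p.1 + b * p.2 : ℝ) : ℂ) - I * s)⁻¹ := rfl

/-- The closed linear span of the basic resolvents. -/
noncomputable def resolventSpace : Submodule ℂ ((ℝ × ℝ) →ᵇ ℂ) :=
  (Submodule.span ℂ basicResolvents2).topologicalClosure

lemma resolvent2_mem (a b s : ℝ) (hs : s ≠ 0) : resolvent2 a b s hs ∈ resolventSpace :=
  Submodule.le_topologicalClosure _
    (Submodule.subset_span ⟨a, b, s, hs, fun p => resolvent2_apply a b s hs p⟩)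

lemma mem_resolventSpace_of_approx {g : (ℝ × ℝ) →ᵇ ℂ}
    (h : ∀ ε > 0, ∃ f ∈ resolventSpace, ∀ p, ‖g p - f p‖ ≤ ε) : g ∈ resolventSpace := by
  have hc : IsClosed (resolventSpace : Set ((ℝ × ℝ) →ᵇ ℂ)) :=
    Submodule.isClosed_topologicalClosure _
  rw [← SetLike.mem_coe, ← hc.closure_eq, Metric.mem_closure_iff]
  intro ε hε
  obtain ⟨f, hf, hfg⟩ := h (ε / 2) (by positivity)
  refine ⟨f, hf, lt_of_le_of_lt ?_ (half_lt_self hε)⟩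
  rw [BoundedContinuousFunction.dist_le (by positivity)]
  intro p
  rw [dist_eq_norm]
  exact hfg p

/-- The error of the difference quotient in `s` at `s = 1` with increment `h` is
`ih (w - i)⁻² (w - i(1 + h))⁻¹`, which has norm at most `h`. -/
lemma sq_error (w h : ℝ) (hh : 0 < h) :
    ‖((w : ℂ) - I * (1 : ℝ))⁻¹ * ((w : ℂ) - I * (1 : ℝ))⁻¹ -
      (I * h)⁻¹ * (((w : ℂ) - I * (1 + h : ℝ))⁻¹ - ((w : ℂ) - I * (1 : ℝ))⁻¹)‖ ≤ h := by
  have h1 := sub_I_mul_ne one_ne_zero w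
  have h2 := sub_I_mul_ne (s := 1 + h) (by positivity) w
  have n1 := norm_inv_sub_I_mul_le one_ne_zero w
  have n2 := norm_inv_sub_I_mul_le (s := 1 + h) (by positivity) w
  have hc : (h : ℂ) ≠ 0 := by exact_mod_cast hh.ne'
  have key : ((w : ℂ) - I * (1 : ℝ))⁻¹ * ((w : ℂ) - I * (1 : ℝ))⁻¹ -
      (I * h)⁻¹ * (((w : ℂ) - I * (1 + h : ℝ))⁻¹ - ((w : ℂ) - I * (1 : ℝ))⁻¹) =
      -(I * h) * (((w : ℂ) - I * (1 : ℝ))⁻¹ * ((w : ℂ) - I * (1 : ℝ))⁻¹ *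
        ((w : ℂ) - I * (1 + h : ℝ))⁻¹) := by
    have hd : I * (h : ℂ) ≠ 0 := mul_ne_zero I_ne_zero hc
    have hA : (w : ℂ) - I * (1 : ℝ) = ((w : ℂ) - I * (1 + h : ℝ)) + I * h := by
      push_cast
      ring
    generalize (w : ℂ) - I * (1 + h : ℝ) = B at *
    generalize (w : ℂ) - I * (1 : ℝ) = A at *
    generalize I * (h : ℂ) = d at *
    field_simp
    rw [hA]
    ring
  rw [key, norm_mul, norm_mul, norm_mul, norm_neg, norm_mul, Complex.norm_I, one_mul,
    Complex.norm_real, Real.norm_of_nonneg hh.le]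
  rw [abs_one, inv_one] at n1
  have n2' : ‖((w : ℂ) - I * (1 + h : ℝ))⁻¹‖ ≤ 1 :=
    n2.trans (inv_le_one_of_one_le₀ (by rw [abs_of_pos (by positivity)]; linarith))
  exact mul_le_of_le_one_right hh.le (mul_le_one₀ (mul_le_one₀ n1 (norm_nonneg _) n1)
    (norm_nonneg _) n2')

lemma sq_mem (a b : ℝ) :
    resolvent2 a b 1 one_ne_zero * resolvent2 a b 1 one_ne_zero ∈ resolventSpace := by
  apply mem_resolventSpace_of_approx
  intro ε hε
  refine ⟨(I * (ε : ℂ))⁻¹ • (resolvent2 a b (1 + ε) (by positivity) -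
    resolvent2 a b 1 one_ne_zero), Submodule.smul_mem _ _
      (Submodule.sub_mem _ (resolvent2_mem _ _ _ _) (resolvent2_mem _ _ _ _)), fun p => ?_⟩
  exact sq_error (a * p.1 + b * p.2) ε hε

/-- The chordal distance `|(v - i)⁻¹ - (w - i)⁻¹|` is `|sin (arctan v - arctan w)|`, and
`sin² θ ≤ |θ|`. -/
lemma norm_sub_sq_le_arctan (v w : ℝ) :
    ‖((v : ℂ) - I * (1 : ℝ))⁻¹ - ((w : ℂ) - I * (1 : ℝ))⁻¹‖ ^ 2 ≤
      |Real.arctan v - Real.arctan w| := by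
  have h1 := sub_I_mul_ne one_ne_zero v
  have h2 := sub_I_mul_ne one_ne_zero w
  have hn : ∀ t : ℝ, ‖(t : ℂ) - I * (1 : ℝ)‖ ^ 2 = 1 + t ^ 2 := by
    intro t
    rw [← Complex.normSq_eq_norm_sq, Complex.normSq_apply]
    simp
    ring
  have e1 : ‖((v : ℂ) - I * (1 : ℝ))⁻¹ - ((w : ℂ) - I * (1 : ℝ))⁻¹‖ ^ 2 =
      (v - w) ^ 2 / ((1 + v ^ 2) * (1 + w ^ 2)) := by
    rw [inv_sub_inv h1 h2, norm_div, norm_mul, div_pow, mul_pow, hn, hn]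
    congr 1
    rw [sub_sub_sub_cancel_right, ← Complex.ofReal_sub, Complex.norm_real, Real.norm_eq_abs,
      sq_abs]
    ring
  have e2 : Real.sin (Real.arctan v - Real.arctan w) ^ 2 =
      (v - w) ^ 2 / ((1 + v ^ 2) * (1 + w ^ 2)) := by
    rw [Real.sin_sub, Real.sin_arctan, Real.sin_arctan, Real.cos_arctan, Real.cos_arctan]
    have p1 : 0 < 1 + v ^ 2 := by positivity
    have p2 : 0 < 1 + w ^ 2 := by positivity
    rw [div_mul_div_comm, div_mul_div_comm, ← sub_div, div_pow, mul_pow, Real.sq_sqrt p1.le,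
      Real.sq_sqrt p2.le]
    ring
  rw [e1, ← e2, ← sq_abs]
  have s1 := Real.abs_sin_le_one (Real.arctan v - Real.arctan w)
  have s2 := Real.abs_sin_le_abs (x := Real.arctan v - Real.arctan w)
  nlinarith [abs_nonneg (Real.sin (Real.arctan v - Real.arctan w))]

/-- The `k`-th node `w_k` of the subdivision of the segment from `y` to `x` into `N` steps. -/
noncomputable def node (x y : ℝ) (N k : ℕ) : ℝ := y + k / N * (x - y)

/-- `a_k = (w_k - i)⁻¹`. -/
noncomputable def nodeInv (x y : ℝ) (N k : ℕ) : ℂ := ((node x y N k : ℂ) - I * (1 : ℝ))⁻¹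

lemma node_zero (x y : ℝ) (N : ℕ) : node x y N 0 = y := by simp [node]

lemma node_self (x y : ℝ) {N : ℕ} (hN : N ≠ 0) : node x y N N = x := by
  have : (N : ℝ) ≠ 0 := by exact_mod_cast hN
  simp [node, this]

lemma discrete_feynman (x y : ℝ) {N : ℕ} (hN : N ≠ 0) :
    nodeInv x y N 0 * nodeInv x y N N =
      (N : ℂ)⁻¹ * ∑ k ∈ Finset.range N, nodeInv x y N k * nodeInv x y N (k + 1) := by
  have hNc : (N : ℂ) ≠ 0 := by exact_mod_cast hN
  rcases eq_or_ne x y with rfl | hxy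
  · simp [nodeInv, node, hNc]
  have step : ∀ m k : ℕ, nodeInv x y N k - nodeInv x y N m =
      ((m : ℂ) - k) * ((x - y : ℂ) / N) * (nodeInv x y N k * nodeInv x y N m) := by
    intro m k
    have h1 := sub_I_mul_ne one_ne_zero (node x y N k)
    have h2 := sub_I_mul_ne one_ne_zero (node x y N m)
    rw [nodeInv, nodeInv, inv_sub_inv h1 h2, div_eq_mul_inv, mul_inv]
    congr 1
    simp only [node]
    push_cast
    field_simp
    ring
  have tel := Finset.sum_range_sub' (nodeInv x y N) N
  simp_rw [step] at tel
  have hu : (x - y : ℂ) ≠ 0 := sub_ne_zero.mpr (by exact_mod_cast hxy)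
  apply mul_left_cancel₀ hu
  have e : ∀ k : ℕ, ((k + 1 : ℕ) : ℂ) - k = 1 := fun k => by push_cast; ring
  simp_rw [e, one_mul] at tel
  rw [← Finset.mul_sum] at tel
  push_cast at tel
  rw [sub_zero, mul_div_cancel₀ _ hNc] at tel
  rw [← tel]
  ring

lemma sum_sq_le_pi (x y : ℝ) {N : ℕ} :
    ∑ k ∈ Finset.range N, ‖nodeInv x y N k - nodeInv x y N (k + 1)‖ ^ 2 ≤ Real.pi := by
  have bd : ∀ u v : ℝ, |Real.arctan u - Real.arctan v| ≤ Real.pi := by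
    intro u v
    rw [abs_le]
    constructor <;> linarith [Real.arctan_lt_pi_div_two u, Real.neg_pi_div_two_lt_arctan u,
      Real.arctan_lt_pi_div_two v, Real.neg_pi_div_two_lt_arctan v]
  have hstep : ∀ k : ℕ, node x y N (k + 1) - node x y N k = (x - y) / N := by
    intro k
    simp only [node]
    push_cast
    ring
  refine (Finset.sum_le_sum fun k _ => norm_sub_sq_le_arctan _ _).trans ?_
  -- The nodes are monotone in `k`, so all increments of `arctan` have the same sign.
  rcases le_total y x with h | h
  · have hm : ∀ k : ℕ, node x y N k ≤ node x y N (k + 1) := fun k => by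
      have : 0 ≤ (x - y) / N := div_nonneg (by linarith) (by positivity)
      linarith [hstep k]
    simp_rw [fun k => abs_of_nonpos (sub_nonpos.mpr (Real.arctan_mono (hm k))), neg_sub]
    rw [Finset.sum_range_sub (fun k => Real.arctan (node x y N k))]
    exact (le_abs_self _).trans (bd _ _)
  · have hm : ∀ k : ℕ, node x y N (k + 1) ≤ node x y N k := fun k => by
      have : (x - y) / N ≤ 0 := div_nonpos_of_nonpos_of_nonneg (by linarith) (by positivity)
      linarith [hstep k]
    simp_rw [fun k => abs_of_nonneg (sub_nonneg.mpr (Real.arctan_mono (hm k)))]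
    rw [Finset.sum_range_sub' (fun k => Real.arctan (node x y N k))]
    exact (le_abs_self _).trans (bd _ _)

lemma feynman_error (x y : ℝ) {N : ℕ} (hN : N ≠ 0) :
    ‖nodeInv x y N 0 * nodeInv x y N N - (2 * N : ℂ)⁻¹ * ∑ k ∈ Finset.range N,
      (nodeInv x y N k * nodeInv x y N k + nodeInv x y N (k + 1) * nodeInv x y N (k + 1))‖ ≤
      Real.pi / (2 * N) := by
  have e : nodeInv x y N 0 * nodeInv x y N N - (2 * N : ℂ)⁻¹ * ∑ k ∈ Finset.range N,
      (nodeInv x y N k * nodeInv x y N k + nodeInv x y N (k + 1) * nodeInv x y N (k + 1)) =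
      -((2 * N : ℂ)⁻¹ * ∑ k ∈ Finset.range N, (nodeInv x y N k - nodeInv x y N (k + 1)) ^ 2) := by
    have : (N : ℂ)⁻¹ = (2 * N : ℂ)⁻¹ * 2 := by
      rw [mul_inv]; ring
    rw [discrete_feynman x y hN, this, mul_assoc, ← mul_sub, ← mul_neg, Finset.mul_sum,
      ← Finset.sum_sub_distrib, ← Finset.sum_neg_distrib]
    congr 1
    exact Finset.sum_congr rfl fun k _ => by ring
  rw [e, norm_neg, norm_mul, norm_inv, norm_mul, Complex.norm_ofNat, Complex.norm_natCast,
    div_eq_inv_mul]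
  gcongr
  refine (norm_sum_le _ _).trans ?_
  simp_rw [norm_pow]
  exact sum_sq_le_pi x y

lemma product_mem (c d : ℝ) :
    resolvent2 0 d 1 one_ne_zero * resolvent2 c 0 1 one_ne_zero ∈ resolventSpace := by
  apply mem_resolventSpace_of_approx
  intro ε hε
  obtain ⟨n, hn⟩ := exists_nat_gt (Real.pi / (2 * ε))
  have hnpos : (0 : ℝ) < n := lt_trans (by positivity) hn
  have hn0 : n ≠ 0 := by exact_mod_cast hnpos.ne'
  -- `w_k` for `x = c * p.1`, `y = d * p.2` is the linear form with these coefficients.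
  let R : ℕ → (ℝ × ℝ) →ᵇ ℂ := fun k =>
    resolvent2 (k / n * c) ((1 - k / n) * d) 1 one_ne_zero
  have hR : ∀ k p, R k p = nodeInv (c * p.1) (d * p.2) n k := by
    intro k p
    simp only [R, resolvent2_apply, nodeInv, node]
    congr 3
    ring
  refine ⟨(2 * n : ℂ)⁻¹ • ∑ k ∈ Finset.range n, (R k * R k + R (k + 1) * R (k + 1)),
    Submodule.smul_mem _ _ (Submodule.sum_mem _ fun k _ =>
      Submodule.add_mem _ (sq_mem _ _) (sq_mem _ _)), fun p => ?_⟩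
  have h := feynman_error (c * p.1) (d * p.2) hn0
  have hle : Real.pi / (2 * n) ≤ ε := by
    rw [div_lt_iff₀ (by positivity)] at hn
    rw [div_le_iff₀ (by positivity)]
    linarith
  refine le_trans (le_of_eq ?_) (h.trans hle)
  congr 2
  · simp [resolvent2_apply, nodeInv, node_zero, node_self _ _ hn0]
  · simp [hR]

/-- For all nonzero real `r, r'`, the function `(x, y) ↦ (x - i r)⁻¹ (y - i r')⁻¹` lies in
the closure (supremum norm in the bounded continuous functions `ℝ² → ℂ`) of the linear span
of the two-variable basic resolvents. -/
theorem resolvent_product_mem_closure_span (r r' : ℝ) (hr : r ≠ 0) (hr' : r' ≠ 0) :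
    ∃ g : (ℝ × ℝ) →ᵇ ℂ,
      (∀ p : ℝ × ℝ, g p = ((p.1 : ℂ) - Complex.I * r)⁻¹ * ((p.2 : ℂ) - Complex.I * r')⁻¹) ∧
      g ∈ closure (Submodule.span ℂ basicResolvents2 : Set ((ℝ × ℝ) →ᵇ ℂ)) := by
  refine ⟨((r : ℂ)⁻¹ * (r' : ℂ)⁻¹) •
    (resolvent2 0 r'⁻¹ 1 one_ne_zero * resolvent2 r⁻¹ 0 1 one_ne_zero), fun p => ?_,
    Submodule.smul_mem resolventSpace _ (product_mem r⁻¹ r'⁻¹)⟩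
  have hs : ∀ {s : ℝ}, s ≠ 0 → ∀ t : ℝ,
      ((t : ℂ) - I * s)⁻¹ = (s : ℂ)⁻¹ * (((s⁻¹ * t : ℝ) : ℂ) - I * (1 : ℝ))⁻¹ := by
    intro s hs t
    have hsc : (s : ℂ) ≠ 0 := by exact_mod_cast hs
    rw [← mul_inv]
    congr 1
    push_cast
    field_simp
  rw [hs hr, hs hr']
  simp only [BoundedContinuousFunction.smul_apply, BoundedContinuousFunction.mul_apply,
    resolvent2_apply, zero_mul, zero_add, add_zero, smul_eq_mul]
  ring
end
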